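/- Let f: ℝ^d → ℝ be L₀-Lipschitz with respect to the Euclidean norm. Then its Gaussian smoothing f_δ(x) = E_{u ~ N(0, I_d)}[f(x + δu)] is differentiable with L₁-Lipschitz gradient for L₁ = √d L₀ / δ. -/

import Mathlib

open MeasureTheory ProbabilityTheory

noncomputable def stdGaussian (d : ℕ) : Measure (EuclideanSpace ℝ (Fin d)) :=
  (Measure.pi fun _ : Fin d => gaussianReal 0 1).map
    ⇑(EuclideanSpace.equiv (Fin d) ℝ).symm

/-!
Translating the standard Gaussian measure by `h` multiplies it by the density
`exp (⟪h, u⟫ - ‖h‖² / 2)`, so that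
`E[f(x + δ(u + h))] = E[exp (⟪h, u⟫ - ‖h‖² / 2) • f(x + δu)]`.
On the right-hand side the dependence on `h` is smooth whatever the regularity of `f`, and
differentiating at `h = 0` gives `∇f_δ(x) = δ⁻¹ E[f(x + δu) u]`. Tested against a vector `v`, the
difference `∇f_δ(x) - ∇f_δ(y)` is at most `δ⁻¹ L₀ ‖x - y‖ E|⟪v, u⟫|`, and
`E|⟪v, u⟫| ≤ (E⟪v, u⟫²)^(1/2) = ‖v‖`: testing one direction at a time, instead of bounding `E‖u‖`
by `√d`, gives the Lipschitz constant `L₀ / δ`, which is at most `√d L₀ / δ` when `d ≥ 1`.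
-/

open scoped NNReal ENNReal RealInnerProductSpace

lemma map_eq_map_of_mgf_eq {Ω Ω' : Type*} {mΩ : MeasurableSpace Ω} {mΩ' : MeasurableSpace Ω'}
    {μ : Measure Ω} {ν : Measure Ω'} [IsProbabilityMeasure μ] [IsFiniteMeasure ν]
    {X : Ω → ℝ} {Y : Ω' → ℝ} (hX : AEMeasurable X μ) (hY : AEMeasurable Y ν)
    (h0 : 0 ∈ interior (integrableExpSet X μ)) (h : mgf X μ = mgf Y ν) :
    μ.map X = ν.map Y := by
  refine Measure.ext_of_charFun (funext fun t ↦ ?_)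
  rw [← complexMGF_mul_I hX, ← complexMGF_mul_I hY]
  exact eqOn_complexMGF_of_mgf h (by simpa using h0)

lemma sq_integral_le_integral_sq {Ω : Type*} {mΩ : MeasurableSpace Ω} {μ : Measure Ω}
    [IsProbabilityMeasure μ] {X : Ω → ℝ} (hX : MemLp X 2 μ) :
    (∫ ω, X ω ∂μ) ^ 2 ≤ ∫ ω, X ω ^ 2 ∂μ := by
  have h := variance_nonneg X μ
  rw [variance_eq_sub hX] at h
  exact sub_nonneg.mp h

section IsGaussian

variable {E : Type*} [NormedAddCommGroup E] [NormedSpace ℝ E] [MeasurableSpace E]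
  (μ : Measure E) [IsGaussian μ]

lemma integral_exp_dual_of_isGaussian (L : StrongDual ℝ E) :
    ∫ u, Real.exp (L u) ∂μ = Real.exp (μ[L] + Var[L; μ] / 2) := by
  simpa [mgf, variance_nonneg] using mgf_gaussianReal (IsGaussian.map_eq_gaussianReal (μ := μ) L) 1

variable [BorelSpace E]

lemma integrable_exp_dual_of_isGaussian (L : StrongDual ℝ E) :
    Integrable (fun u ↦ Real.exp (L u)) μ := by
  have h := integrable_exp_mul_gaussianReal (μ := μ[L]) (v := Var[L; μ].toNNReal) 1
  rw [← IsGaussian.map_eq_gaussianReal L, integrable_map_measure (by fun_prop) (by fun_prop)] at h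
  simpa [Function.comp_def] using h

lemma integrableExpSet_dual_of_isGaussian (L : StrongDual ℝ E) :
    integrableExpSet L μ = Set.univ :=
  Set.eq_univ_of_forall fun t ↦ integrable_exp_dual_of_isGaussian μ (t • L)

lemma integral_exp_add_dual_of_isGaussian (L T : StrongDual ℝ E) :
    ∫ u, Real.exp ((L + T) u) ∂μ =
      Real.exp cov[T, L; μ] * (∫ u, Real.exp (T u) ∂μ) * ∫ u, Real.exp (L u) ∂μ := by
  have hmean : μ[⇑L + ⇑T] = μ[L] + μ[T] :=
    integral_add (IsGaussian.integrable_dual μ L) (IsGaussian.integrable_dual μ T)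
  have hvar : Var[⇑L + ⇑T; μ] = Var[L; μ] + 2 * cov[T, L; μ] + Var[T; μ] := by
    rw [covariance_comm]
    exact variance_add (IsGaussian.memLp_dual μ L 2 (by simp))
      (IsGaussian.memLp_dual μ T 2 (by simp))
  simp only [integral_exp_dual_of_isGaussian, ← Real.exp_add]
  rw [FunLike.coe_add, hmean, hvar]
  ring_nf

lemma mgf_dual_tilted_of_isGaussian (L T : StrongDual ℝ E) (t : ℝ) :
    mgf T (μ.tilted L) t = Real.exp (t * cov[T, L; μ]) * mgf T μ t := by
  have hcov : cov[t • T, L; μ] = t * cov[T, L; μ] := covariance_smul_left t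
  rw [mgf, integral_exp_tilted, div_eq_iff (integral_exp_pos
    (integrable_exp_dual_of_isGaussian μ L)).ne', ← hcov]
  exact integral_exp_add_dual_of_isGaussian μ L (t • T)

variable [CompleteSpace E] [SecondCountableTopology E]

-- The Cameron–Martin formula: both sides have the same moment generating functions along `T`.
theorem tilted_dual_eq_map_add_of_isGaussian {L : StrongDual ℝ E} {v : E}
    (hv : ∀ T : StrongDual ℝ E, cov[T, L; μ] = T v) :
    μ.tilted L = μ.map (· + v) := by
  have : IsProbabilityMeasure (μ.tilted L) :=
    isProbabilityMeasure_tilted (integrable_exp_dual_of_isGaussian μ L)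
  refine Measure.ext_of_charFunDual (funext fun T ↦ ?_)
  rw [charFunDual_eq_charFun_map_one, charFunDual_eq_charFun_map_one]
  refine congrArg (charFun · 1) (map_eq_map_of_mgf_eq (by fun_prop) (by fun_prop) ?_ ?_).symm
  · simp [integrableExpSet_dual_of_isGaussian]
  · ext t
    rw [mgf_dual_tilted_of_isGaussian, hv, mgf_map (by fun_prop) (by fun_prop), mul_comm]
    simpa [Function.comp_def] using mgf_add_const (X := T) (T v)

lemma integrable_exp_mul_norm_of_isGaussian (c : ℝ) :
    Integrable (fun u ↦ Real.exp (c * ‖u‖)) μ := by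
  obtain ⟨C, hC, hint⟩ := IsGaussian.exists_integrable_exp_sq μ
  refine (hint.const_mul (Real.exp (c ^ 2 / (4 * C)))).mono' (by fun_prop) (ae_of_all _ fun u ↦ ?_)
  rw [Real.norm_of_nonneg (Real.exp_nonneg _), ← Real.exp_add, Real.exp_le_exp]
  have hsq : c ^ 2 / (4 * C) + C * ‖u‖ ^ 2 - c * ‖u‖ = (2 * C * ‖u‖ - c) ^ 2 / (4 * C) := by
    field_simp
    ring
  exact sub_nonneg.mp (hsq ▸ by positivity)

lemma memLp_exp_mul_norm_of_isGaussian (c : ℝ) {p : ℝ≥0∞} (hp : p ≠ ∞) :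
    MemLp (fun u ↦ Real.exp (c * ‖u‖)) p μ := by
  rcases eq_or_ne p 0 with rfl | hp0
  · exact memLp_zero_iff_aestronglyMeasurable.mpr (by fun_prop)
  · rw [← integrable_norm_rpow_iff (by fun_prop) hp0 hp]
    convert! integrable_exp_mul_norm_of_isGaussian μ (c * p.toReal) using 2 with u
    rw [Real.norm_of_nonneg (Real.exp_nonneg _), ← Real.exp_mul]
    ring_nf

variable {F : Type*} [NormedAddCommGroup F]

lemma integrable_exp_mul_norm_mul_norm_of_isGaussian (c : ℝ) {p : ℝ≥0∞} (hp : 1 < p) {f : E → F}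
    (hf : MemLp f p μ) :
    Integrable (fun u ↦ Real.exp (c * ‖u‖) * ‖f u‖) μ := by
  have hconj := ENNReal.HolderConjugate.conjExponent hp.le
  have hq : p.conjExponent ≠ ∞ := by
    simp [ENNReal.conjExponent, tsub_eq_zero_iff_le, hp]
  exact (memLp_exp_mul_norm_of_isGaussian μ c hq).integrable_mul hf.norm

lemma memLp_lipschitzWith_of_isGaussian {f : E → F} {L : ℝ≥0} (hf : LipschitzWith L f)
    {p : ℝ≥0∞} (hp : p ≠ ∞) : MemLp f p μ := by
  have h0 : MemLp (fun u ↦ f u - f 0) p μ :=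
    (hf.sub (LipschitzWith.const (f 0))).comp_memLp (sub_self _) (IsGaussian.memLp_id μ p hp)
  simpa [Pi.add_def] using h0.add (memLp_const (f 0))

end IsGaussian

/-- The density at `u` of the translate by `h` of the standard Gaussian measure, with respect to
the standard Gaussian measure itself. -/
noncomputable def gaussianShiftDensity {E : Type*} [NormedAddCommGroup E] [InnerProductSpace ℝ E]
    (h u : E) : ℝ :=
  Real.exp (⟪h, u⟫ - ‖h‖ ^ 2 / 2)

section gaussianShiftDensity

variable {E : Type*} [NormedAddCommGroup E] [InnerProductSpace ℝ E]

lemma hasFDerivAt_gaussianShiftDensity (h u : E) :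
    HasFDerivAt (gaussianShiftDensity · u) (gaussianShiftDensity h u • innerSL ℝ (u - h)) h := by
  have hinner : HasFDerivAt (⟪·, u⟫) (innerSL ℝ u) h := by
    simpa only [real_inner_comm] using! (innerSL ℝ u).hasFDerivAt (x := h)
  have hsq := (hasStrictFDerivAt_norm_sq h).hasFDerivAt.mul_const (1 / 2 : ℝ)
  convert! (hinner.sub hsq).exp using 1
  · ext v
    simp [gaussianShiftDensity, div_eq_mul_inv]
  · ext v
    simp [gaussianShiftDensity, div_eq_mul_inv]

lemma gaussianShiftDensity_le_exp_norm {h : E} (hh : ‖h‖ ≤ 1) (u : E) :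
    gaussianShiftDensity h u ≤ Real.exp ‖u‖ := by
  refine Real.exp_le_exp.mpr ?_
  calc ⟪h, u⟫ - ‖h‖ ^ 2 / 2
    _ ≤ ⟪h, u⟫ := sub_le_self _ (by positivity)
    _ ≤ ‖h‖ * ‖u‖ := real_inner_le_norm h u
    _ ≤ ‖u‖ := mul_le_of_le_one_left (norm_nonneg u) hh

@[fun_prop]
lemma continuous_gaussianShiftDensity (h : E) : Continuous (gaussianShiftDensity h) := by
  unfold gaussianShiftDensity
  fun_prop

@[simp]
lemma gaussianShiftDensity_zero (u : E) : gaussianShiftDensity 0 u = 1 := by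
  simp [gaussianShiftDensity]

lemma norm_gaussianShiftDensity_smul_smulRight_le {F : Type*} [NormedAddCommGroup F]
    [NormedSpace ℝ F] {h : E} (hh : ‖h‖ ≤ 1) (u : E) (y : F) :
    ‖(gaussianShiftDensity h u • innerSL ℝ (u - h)).smulRight y‖ ≤
      Real.exp (2 * ‖u‖) * ‖y‖ := by
  have hpos : 0 ≤ gaussianShiftDensity h u := Real.exp_nonneg _
  have hsub : ‖u - h‖ ≤ Real.exp ‖u‖ := calc
    ‖u - h‖ ≤ ‖u‖ + ‖h‖ := norm_sub_le u h
    _ ≤ ‖u‖ + 1 := by gcongr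
    _ ≤ Real.exp ‖u‖ := Real.add_one_le_exp _
  rw [ContinuousLinearMap.norm_smulRight_apply, norm_smul, innerSL_apply_norm,
    Real.norm_of_nonneg hpos, two_mul, Real.exp_add]
  gcongr
  exact gaussianShiftDensity_le_exp_norm hh u

end gaussianShiftDensity

local notation "γ[" E "]" => ProbabilityTheory.stdGaussian E

section stdGaussian

variable {E F : Type*} [NormedAddCommGroup E] [InnerProductSpace ℝ E] [FiniteDimensional ℝ E]
  [MeasurableSpace E] [BorelSpace E] [NormedAddCommGroup F] [NormedSpace ℝ F]

lemma covariance_dual_inner_stdGaussian (T : StrongDual ℝ E) (h : E) :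
    cov[T, innerSL ℝ h; γ[E]] = T h := by
  obtain ⟨t, rfl⟩ := (InnerProductSpace.toDual ℝ E).surjective T
  have hcov := covarianceBilin_apply_eq_cov (IsGaussian.memLp_two_id (μ := γ[E])) t h
  rw [covarianceBilin_stdGaussian] at hcov
  exact hcov.symm

lemma integral_exp_inner_stdGaussian (h : E) :
    ∫ u, Real.exp ⟪h, u⟫ ∂γ[E] = Real.exp (‖h‖ ^ 2 / 2) := by
  have hexp := integral_exp_dual_of_isGaussian γ[E] (innerSL ℝ h)
  rw [integral_strongDual_stdGaussian, variance_dual_stdGaussian, innerSL_apply_norm] at hexp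
  simpa using hexp

theorem integral_comp_add_stdGaussian (f : E → F) (h : E) :
    ∫ u, f (u + h) ∂γ[E] =
      ∫ u, gaussianShiftDensity h u • f u ∂γ[E] := by
  rw [← (measurableEmbedding_addRight h).integral_map,
    ← tilted_dual_eq_map_add_of_isGaussian _ (covariance_dual_inner_stdGaussian · h),
    integral_tilted]
  simp only [innerSL_apply_apply, integral_exp_inner_stdGaussian, gaussianShiftDensity,
    Real.exp_sub]

lemma integral_abs_dual_stdGaussian_le (L : StrongDual ℝ E) :
    ∫ u, |L u| ∂γ[E] ≤ ‖L‖ := by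
  have hL := IsGaussian.memLp_dual γ[E] L 2 (by simp)
  refine le_of_sq_le_sq ?_ (norm_nonneg L)
  calc (∫ u, |L u| ∂γ[E]) ^ 2
    _ ≤ ∫ u, |L u| ^ 2 ∂γ[E] := sq_integral_le_integral_sq hL.abs
    _ = Var[L; γ[E]] := by simp [variance_eq_sub hL]
    _ = ‖L‖ ^ 2 := variance_dual_stdGaussian L

lemma norm_integral_inner_smulRight_stdGaussian_le {g : E → F} {C : ℝ} (hg : ∀ u, ‖g u‖ ≤ C) :
    ‖∫ u, (innerSL ℝ u).smulRight (g u) ∂γ[E]‖ ≤ C := by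
  have hC : 0 ≤ C := (norm_nonneg _).trans (hg 0)
  by_cases hint : Integrable (fun u ↦ (innerSL ℝ u).smulRight (g u)) γ[E]
  · refine ContinuousLinearMap.opNorm_le_bound _ hC fun v ↦ ?_
    have hv := IsGaussian.integrable_dual γ[E] (innerSL ℝ v)
    calc ‖(∫ u, (innerSL ℝ u).smulRight (g u) ∂γ[E]) v‖
      _ = ‖∫ u, ⟪v, u⟫ • g u ∂γ[E]‖ := by
        simp [ContinuousLinearMap.integral_apply hint, real_inner_comm]
      _ ≤ ∫ u, C * |⟪v, u⟫| ∂γ[E] := by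
        refine norm_integral_le_of_norm_le (hv.abs.const_mul C) (ae_of_all _ fun u ↦ ?_)
        rw [norm_smul, Real.norm_eq_abs, mul_comm]
        gcongr
        exact hg u
      _ ≤ C * ‖v‖ := by
        rw [integral_const_mul, ← innerSL_apply_norm (𝕜 := ℝ) v]
        gcongr
        exact integral_abs_dual_stdGaussian_le (innerSL ℝ v)
  · simpa [integral_undef hint] using hC

lemma integrable_inner_smulRight_stdGaussian {p : ℝ≥0∞} (hp : 1 < p) {f : E → F}
    (hf : MemLp f p γ[E]) : Integrable (fun u ↦ (innerSL ℝ u).smulRight (f u)) γ[E] := by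
  refine (integrable_exp_mul_norm_mul_norm_of_isGaussian _ 2 hp hf).mono'
    ((ContinuousLinearMap.smulRightL ℝ E F).aestronglyMeasurable_comp₂
      (innerSL ℝ).continuous.aestronglyMeasurable hf.aestronglyMeasurable)
    (ae_of_all _ fun u ↦ ?_)
  simpa using norm_gaussianShiftDensity_smul_smulRight_le (h := 0) (by simp) u (f u)

theorem hasFDerivAt_integral_comp_add_stdGaussian {p : ℝ≥0∞} (hp : 1 < p) {f : E → F}
    (hf : MemLp f p γ[E]) :
    HasFDerivAt (fun h ↦ ∫ u, f (u + h) ∂γ[E])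
      (∫ u, (innerSL ℝ u).smulRight (f u) ∂γ[E]) 0 := by
  have hmeas (h : E) : AEStronglyMeasurable (fun u ↦ gaussianShiftDensity h u • f u) γ[E] :=
    (continuous_gaussianShiftDensity h).aestronglyMeasurable.smul hf.aestronglyMeasurable
  have hderiv := hasFDerivAt_integral_of_dominated_of_fderiv_le (𝕜 := ℝ) (μ := γ[E]) (x₀ := 0)
    (F := fun h u ↦ gaussianShiftDensity h u • f u)
    (F' := fun h u ↦ (gaussianShiftDensity h u • innerSL ℝ (u - h)).smulRight (f u))
    (Metric.closedBall_mem_nhds 0 one_pos)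
    (.of_forall hmeas)
    (by simpa using hf.integrable hp.le)
    (by simpa using (integrable_inner_smulRight_stdGaussian hp hf).aestronglyMeasurable)
    (ae_of_all _ fun u h hh ↦
      norm_gaussianShiftDensity_smul_smulRight_le (by simpa using hh) u (f u))
    (integrable_exp_mul_norm_mul_norm_of_isGaussian _ 2 hp hf)
    (ae_of_all _ fun u h _ ↦ (hasFDerivAt_gaussianShiftDensity h u).smul_const (f u))
  simpa [integral_comp_add_stdGaussian] using hderiv

end stdGaussian

/-- The Gaussian smoothing `f_δ(x) = E[f(x + δu)]` of `f`, where `u` is a standard Gaussian vector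
of `E`. -/
noncomputable def gaussianSmoothing {E F : Type*} [NormedAddCommGroup E] [InnerProductSpace ℝ E]
    [FiniteDimensional ℝ E] [MeasurableSpace E] [NormedAddCommGroup F] [NormedSpace ℝ F]
    (δ : ℝ) (f : E → F) (x : E) : F :=
  ∫ u, f (x + δ • u) ∂γ[E]

section gaussianSmoothing

variable {E F : Type*} [NormedAddCommGroup E] [InnerProductSpace ℝ E] [FiniteDimensional ℝ E]
  [MeasurableSpace E] [BorelSpace E] [NormedAddCommGroup F] {f : E → F} {δ : ℝ} {L : ℝ≥0}

lemma memLp_comp_add_smul_of_lipschitzWith (hf : LipschitzWith L f) (δ : ℝ) (x : E) {p : ℝ≥0∞}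
    (hp : p ≠ ∞) : MemLp (fun u ↦ f (x + δ • u)) p γ[E] :=
  memLp_lipschitzWith_of_isGaussian γ[E]
    (hf.comp ((LipschitzWith.const x).add (lipschitzWith_smul δ))) hp

variable [NormedSpace ℝ F]

theorem hasFDerivAt_gaussianSmoothing (hδ : δ ≠ 0) {p : ℝ≥0∞} (hp : 1 < p) {x : E}
    (hf : MemLp (fun u ↦ f (x + δ • u)) p γ[E]) :
    HasFDerivAt (gaussianSmoothing δ f)
      (δ⁻¹ • ∫ u, (innerSL ℝ u).smulRight (f (x + δ • u)) ∂γ[E]) x := by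
  have hshift : gaussianSmoothing δ f =
      (fun h ↦ ∫ u, f (x + δ • (u + h)) ∂γ[E]) ∘ fun y ↦ δ⁻¹ • (y - x) := by
    ext y
    simp [gaussianSmoothing, smul_inv_smul₀ hδ, add_left_comm x, add_comm y]
  have haffine : HasFDerivAt (fun y : E ↦ δ⁻¹ • (y - x)) (δ⁻¹ • .id ℝ E) x :=
    ((hasFDerivAt_id x).sub_const x).const_smul δ⁻¹
  have hderiv := hasFDerivAt_integral_comp_add_stdGaussian hp hf
  rw [← smul_zero δ⁻¹, ← sub_self x] at hderiv
  rw [hshift]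
  simpa using hderiv.comp x haffine

theorem hasFDerivAt_gaussianSmoothing_of_lipschitzWith (hδ : δ ≠ 0) (hf : LipschitzWith L f)
    (x : E) :
    HasFDerivAt (gaussianSmoothing δ f)
      (δ⁻¹ • ∫ u, (innerSL ℝ u).smulRight (f (x + δ • u)) ∂γ[E]) x :=
  hasFDerivAt_gaussianSmoothing (p := 2) hδ (by simp)
    (memLp_comp_add_smul_of_lipschitzWith hf δ x (by simp))

theorem lipschitzWith_fderiv_gaussianSmoothing (hδ : δ ≠ 0) (hf : LipschitzWith L f) :
    LipschitzWith (L / ‖δ‖₊) (fderiv ℝ (gaussianSmoothing δ f)) := by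
  have hint (x : E) :
      Integrable (fun u ↦ (innerSL ℝ u).smulRight (f (x + δ • u))) γ[E] :=
    integrable_inner_smulRight_stdGaussian (p := 2) (by simp)
      (memLp_comp_add_smul_of_lipschitzWith hf δ x (by simp))
  have hfxy (x y u : E) : ‖f (x + δ • u) - f (y + δ • u)‖ ≤ L * ‖x - y‖ := by
    simpa using hf.norm_sub_le (x + δ • u) (y + δ • u)
  refine LipschitzWith.of_dist_le_mul fun x y ↦ ?_
  rw [(hasFDerivAt_gaussianSmoothing_of_lipschitzWith hδ hf x).fderiv,
    (hasFDerivAt_gaussianSmoothing_of_lipschitzWith hδ hf y).fderiv, dist_eq_norm, dist_eq_norm]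
  calc _ = ‖δ‖⁻¹ * ‖∫ u, (innerSL ℝ u).smulRight (f (x + δ • u) - f (y + δ • u)) ∂γ[E]‖ := by
        rw [← smul_sub, ← integral_sub (hint x) (hint y), norm_smul, norm_inv]
        congr! with u
        exact (((ContinuousLinearMap.smulRightL ℝ E F) (innerSL ℝ u)).map_sub _ _).symm
    _ ≤ ‖δ‖⁻¹ * (L * ‖x - y‖) := by
        gcongr
        exact norm_integral_inner_smulRight_stdGaussian_le (hfxy x y)
    _ = (L / ‖δ‖₊ : ℝ≥0) * ‖x - y‖ := by
        push_cast
        ring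

theorem gaussian_smoothing_gradient_lipschitz_general [CompleteSpace F] (hδ : δ ≠ 0)
    (hf : LipschitzWith L f) :
    Differentiable ℝ (gaussianSmoothing δ f) ∧
      LipschitzWith (L / ‖δ‖₊) (fderiv ℝ (gaussianSmoothing δ f)) :=
  ⟨fun x ↦ (hasFDerivAt_gaussianSmoothing_of_lipschitzWith hδ hf x).differentiableAt,
    lipschitzWith_fderiv_gaussianSmoothing hδ hf⟩

end gaussianSmoothing

lemma norm_gradient_sub_gradient {𝕜 H : Type*} [RCLike 𝕜] [NormedAddCommGroup H]
    [InnerProductSpace 𝕜 H] [CompleteSpace H] (g : H → 𝕜) (x y : H) :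
    ‖gradient g x - gradient g y‖ = ‖fderiv 𝕜 g x - fderiv 𝕜 g y‖ := by
  rw [gradient, gradient, ← map_sub, LinearIsometryEquiv.norm_map]

lemma norm_le_sqrt_finrank_mul_norm {V : Type*} [NormedAddCommGroup V] [NormedSpace ℝ V]
    [FiniteDimensional ℝ V] (v : V) : ‖v‖ ≤ √(Module.finrank ℝ V) * ‖v‖ := by
  rcases subsingleton_or_nontrivial V with _ | _
  · simp [Subsingleton.elim v 0]
  · refine le_mul_of_one_le_left (norm_nonneg v) (Real.one_le_sqrt.mpr ?_)
    exact_mod_cast Module.finrank_pos (R := ℝ) (M := V)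

lemma stdGaussian_eq_stdGaussian_euclideanSpace (d : ℕ) :
    stdGaussian d = γ[EuclideanSpace ℝ (Fin d)] := by
  rw [← map_pi_eq_stdGaussian]
  rfl

theorem gaussian_smoothing_gradient_lipschitz
    (d : ℕ) (f : EuclideanSpace ℝ (Fin d) → ℝ) (L₀ δ : ℝ) (hδ : 0 < δ) (hL₀ : 0 ≤ L₀)
    (hf : ∀ x y, |f x - f y| ≤ L₀ * ‖x - y‖) :
    Differentiable ℝ (fun x => ∫ u, f (x + δ • u) ∂(stdGaussian d)) ∧
      ∀ x y, ‖gradient (fun x => ∫ u, f (x + δ • u) ∂(stdGaussian d)) x -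
          gradient (fun x => ∫ u, f (x + δ • u) ∂(stdGaussian d)) y‖ ≤
        Real.sqrt d * L₀ / δ * ‖x - y‖ := by
  lift L₀ to ℝ≥0 using hL₀
  have hlip : LipschitzWith L₀ f := .of_dist_le_mul fun x y ↦ by
    simpa [dist_eq_norm] using hf x y
  simp only [stdGaussian_eq_stdGaussian_euclideanSpace]
  obtain ⟨hdiff, hfderiv⟩ := gaussian_smoothing_gradient_lipschitz_general hδ.ne' hlip
  refine ⟨hdiff, fun x y ↦ ?_⟩
  calc _ = ‖fderiv ℝ (gaussianSmoothing δ f) x - fderiv ℝ (gaussianSmoothing δ f) y‖ :=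
        norm_gradient_sub_gradient (gaussianSmoothing δ f) x y
    _ ≤ L₀ / δ * ‖x - y‖ := by simpa [abs_of_pos hδ] using hfderiv.norm_sub_le x y
    _ ≤ L₀ / δ * (√d * ‖x - y‖) := by
        gcongr
        simpa using norm_le_sqrt_finrank_mul_norm (x - y)
    _ = √d * L₀ / δ * ‖x - y‖ := by ring
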